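/- Let B ∈ Matrix (Fin N) (Fin P) ℝ and σ > 0 satisfy ‖Bᵀx‖ ≥ σ‖x‖ for all x ∈ ℝ^N (Euclidean norms), and let q : ℝ^M → ℝ^P be a map that is (√Λ · L_K)-Lipschitz. Define Ḡ : ℝ^M → ℝ^N by Ḡ(y) = (B * Bᵀ)⁻¹ * B * q(y). Then Ḡ is (σ⁻¹ · √Λ · L_K)-Lipschitz, i.e., ‖Ḡ(y₁) − Ḡ(y₂)‖ ≤ σ⁻¹ √Λ L_K ‖y₁ − y₂‖ for all y₁, y₂ ∈ ℝ^M. -/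

import Mathlib

/-!
Put `v = q y₁ - q y₂`, `g = (BBᵀ)⁻¹ B v` and `w = Bᵀ g`. The lower bound on `Bᵀ` makes `BBᵀ`
invertible, so `B w = B v`, and hence `w ⬝ w = g ⬝ B w = g ⬝ B v = w ⬝ v`: the vector `w` is
the orthogonal projection of `v` onto the range of `Bᵀ`. Cauchy–Schwarz gives `‖w‖ ≤ ‖v‖`, and
the lower bound on `Bᵀ` gives `σ ‖g‖ ≤ ‖w‖ ≤ ‖v‖`.
-/

open Matrix

/-- Euclidean norm of a vector in `Fin n → ℝ`. -/
noncomputable def euclNorm {n : ℕ} (x : Fin n → ℝ) : ℝ :=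
  ‖(WithLp.equiv 2 (Fin n → ℝ)).symm x‖

lemma euclNorm_nonneg {n : ℕ} (x : Fin n → ℝ) : 0 ≤ euclNorm x := norm_nonneg _

lemma euclNorm_sq {n : ℕ} (x : Fin n → ℝ) : euclNorm x ^ 2 = x ⬝ᵥ x := by
  rw [euclNorm, EuclideanSpace.norm_sq_eq]
  simp [dotProduct, sq]

lemma eq_zero_of_euclNorm_nonpos {n : ℕ} {x : Fin n → ℝ} (h : euclNorm x ≤ 0) : x = 0 := by
  have h0 : euclNorm x = 0 := le_antisymm h (euclNorm_nonneg x)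
  have h1 := euclNorm_sq x
  rw [h0] at h1
  exact dotProduct_self_eq_zero.1 (by simpa using h1.symm)

lemma dotProduct_le_euclNorm_mul {n : ℕ} (x y : Fin n → ℝ) :
    x ⬝ᵥ y ≤ euclNorm x * euclNorm y := by
  refine abs_le_of_sq_le_sq' ?_ (mul_nonneg (euclNorm_nonneg x) (euclNorm_nonneg y)) |>.2
  rw [mul_pow, euclNorm_sq, euclNorm_sq]
  simpa [dotProduct, sq] using Finset.sum_mul_sq_le_sq_mul_sq Finset.univ x y

lemma dotProduct_mulVec_eq_transpose {N P : ℕ} (B : Matrix (Fin N) (Fin P) ℝ)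
    (x : Fin N → ℝ) (v : Fin P → ℝ) : x ⬝ᵥ B *ᵥ v = (Bᵀ *ᵥ x) ⬝ᵥ v := by
  rw [dotProduct_mulVec, mulVec_transpose]

lemma isUnit_mul_transpose_of_lower_bound {N P : ℕ} (B : Matrix (Fin N) (Fin P) ℝ) {σ : ℝ}
    (hσ : 0 < σ) (hB : ∀ x : Fin N → ℝ, σ * euclNorm x ≤ euclNorm (Bᵀ *ᵥ x)) :
    IsUnit (B * Bᵀ) := by
  rw [← mulVec_injective_iff_isUnit]
  refine (injective_iff_map_eq_zero (B * Bᵀ).mulVecLin).2 fun x hx => ?_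
  have hx' : B *ᵥ (Bᵀ *ᵥ x) = 0 := by
    rw [mulVec_mulVec]
    exact hx
  have h0 : (Bᵀ *ᵥ x) ⬝ᵥ (Bᵀ *ᵥ x) = 0 := by
    rw [← dotProduct_mulVec_eq_transpose, hx', dotProduct_zero]
  have h1 := hB x
  rw [dotProduct_self_eq_zero.1 h0] at h1
  have h2 : euclNorm (0 : Fin P → ℝ) = 0 := by simp [euclNorm]
  rw [h2] at h1
  exact eq_zero_of_euclNorm_nonpos (nonpos_of_mul_nonpos_right h1 hσ)

/-- The pseudoinverse `(BBᵀ)⁻¹ B` of `Bᵀ` has operator norm at most `σ⁻¹`. -/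
lemma euclNorm_pinv_mulVec_le {N P : ℕ} (B : Matrix (Fin N) (Fin P) ℝ) {σ : ℝ}
    (hσ : 0 < σ) (hB : ∀ x : Fin N → ℝ, σ * euclNorm x ≤ euclNorm (Bᵀ *ᵥ x))
    (v : Fin P → ℝ) : σ * euclNorm ((B * Bᵀ)⁻¹ *ᵥ (B *ᵥ v)) ≤ euclNorm v := by
  have hu := (isUnit_iff_isUnit_det _).1 (isUnit_mul_transpose_of_lower_bound B hσ hB)
  set g := (B * Bᵀ)⁻¹ *ᵥ (B *ᵥ v) with hg
  have hBw : B *ᵥ (Bᵀ *ᵥ g) = B *ᵥ v := by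
    rw [mulVec_mulVec, hg, mulVec_mulVec, mul_nonsing_inv _ hu, one_mulVec]
  have hwv : euclNorm (Bᵀ *ᵥ g) ^ 2 = (Bᵀ *ᵥ g) ⬝ᵥ v := by
    rw [euclNorm_sq, ← dotProduct_mulVec_eq_transpose, hBw, dotProduct_mulVec_eq_transpose]
  have hcs := dotProduct_le_euclNorm_mul (Bᵀ *ᵥ g) v
  refine (hB g).trans ?_
  by_contra! hlt
  nlinarith [euclNorm_nonneg v]

/-- Stability of the reformulated inverse problem: if `‖Bᵀx‖ ≥ σ‖x‖` and the stacked
coefficient map `q` is `√Λ·L_K`-Lipschitz, then the unregularized reconstruction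
`Ḡ(y) = (BBᵀ)⁻¹ B q(y)` is `σ⁻¹ √Λ L_K`-Lipschitz. -/
theorem reconstruction_lipschitz_bound
    (N P M Λ : ℕ) (B : Matrix (Fin N) (Fin P) ℝ) (σ L_K : ℝ) (hσ : 0 < σ)
    (hB : ∀ x : Fin N → ℝ, σ * euclNorm x ≤ euclNorm (Bᵀ.mulVec x))
    (q : EuclideanSpace ℝ (Fin M) → Fin P → ℝ)
    (hq : ∀ y₁ y₂ : EuclideanSpace ℝ (Fin M),
      euclNorm (q y₁ - q y₂) ≤ Real.sqrt Λ * L_K * ‖y₁ - y₂‖)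
    (G : EuclideanSpace ℝ (Fin M) → Fin N → ℝ)
    (hG : ∀ y, G y = (B * Bᵀ)⁻¹.mulVec (B.mulVec (q y))) :
    ∀ y₁ y₂ : EuclideanSpace ℝ (Fin M),
      euclNorm (G y₁ - G y₂) ≤ σ⁻¹ * Real.sqrt Λ * L_K * ‖y₁ - y₂‖ := by
  intro y₁ y₂
  have h := (euclNorm_pinv_mulVec_le B hσ hB (q y₁ - q y₂)).trans (hq y₁ y₂)
  rw [mulVec_sub, mulVec_sub, ← hG, ← hG] at h
  calc euclNorm (G y₁ - G y₂) ≤ σ⁻¹ * (Real.sqrt Λ * L_K * ‖y₁ - y₂‖) :=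
        (le_inv_mul_iff₀ hσ).2 h
    _ = σ⁻¹ * Real.sqrt Λ * L_K * ‖y₁ - y₂‖ := by ring
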